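/- arXiv:1801.00186 — 2 statements merged into one kernel-verified Lean document; each statement's English description precedes it below -/
import Mathlib

section
/- Let 1 ≤ p < ∞ be real, let μ be a real number with μ > (n−1) − n/p, and set ν = μ − (n−1)/p′ and ω = π^{(n−1)/(2p′)} · (Γ(n/2)/Γ(1/2))^{1/p} · Γ((μ + n/p − n + 1)/2) / Γ((μ + n/p)/2). Then for every measurable function f : ℝ^n → [0,∞], ( ∫_{S^{n-1}} ∫_ℝ (Rf(θ,t))^p |t|^{νp} dt d*θ )^{1/p} ≤ ω · ( ∫_{ℝ^n} f(x)^p |x|^{μp} dx )^{1/p}. (This is the case k = n−1 of the weighted norm estimate for the k-plane transform: R maps L^p_μ(ℝ^n) boundedly to L^p_ν with norm at most ω.) -/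
open MeasureTheory Metric Real
open scoped ENNReal

noncomputable section

/-- The normalized (probability) surface measure `d*θ` on the unit sphere of
`EuclideanSpace ℝ (Fin n)`. -/
def sphMeasure (n : ℕ) : Measure (sphere (0 : EuclideanSpace ℝ (Fin n)) 1) :=
  ((volume : Measure (EuclideanSpace ℝ (Fin n))).toSphere Set.univ)⁻¹ •
    (volume : Measure (EuclideanSpace ℝ (Fin n))).toSphere

/-- The hyperplane Radon transform: `Rf(θ,t) = ∫_{θ^⊥} f(tθ + y) dy`, where `θ^⊥` carries its
canonical Lebesgue measure as an (n-1)-dimensional inner product space. -/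
def Radon (n : ℕ) (f : EuclideanSpace ℝ (Fin n) → ℝ≥0∞)
    (θ : sphere (0 : EuclideanSpace ℝ (Fin n)) 1) (t : ℝ) : ℝ≥0∞ :=
  ∫⁻ y : ((ℝ ∙ (θ : EuclideanSpace ℝ (Fin n)))ᗮ),
    f (t • (θ : EuclideanSpace ℝ (Fin n)) + (y : EuclideanSpace ℝ (Fin n)))

section helpers
variable {n : ℕ}

theorem decomp (θ : EuclideanSpace ℝ (Fin n)) (hθ : ‖θ‖ = 1) (G : (EuclideanSpace ℝ (Fin n)) → ℝ≥0∞) (hG : Measurable G) :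
    ∫⁻ t : ℝ, ∫⁻ y : (ℝ ∙ θ)ᗮ, G (t • θ + y) = ∫⁻ x, G x := by
  have h1 := ((ℝ ∙ θ).orthogonalDecomposition.symm).measurePreserving
  have h2 := WithLp.volume_preserving_toLp (U := (ℝ ∙ θ)) (V := (ℝ ∙ θ)ᗮ)
  have h3 := (LinearIsometryEquiv.toSpanUnitSingleton (𝕜 := ℝ) θ hθ).measurePreserving
  rw [← (h1.comp h2).lintegral_comp hG, Measure.volume_eq_prod, lintegral_prod _ (by
    exact (hG.comp (h1.comp h2).measurable).aemeasurable), ← h3.lintegral_comp]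
  · refine lintegral_congr fun t => lintegral_congr fun y => ?_
    congr 1
  · exact (hG.comp (h1.comp h2).measurable).lintegral_prod_right'

theorem polar (hn : 1 ≤ n) (G : (EuclideanSpace ℝ (Fin n)) → ℝ≥0∞) (hG : Measurable G) :
    ∫⁻ x, G x = ∫⁻ θ, ∫⁻ r in Set.Ioi (0:ℝ), ENNReal.ofReal (r ^ (n-1)) * G (r • (θ : EuclideanSpace ℝ (Fin n)))
      ∂volume ∂(volume : Measure (EuclideanSpace ℝ (Fin n))).toSphere := by
  have : Nonempty (Fin n) := ⟨⟨0, hn⟩⟩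
  have h := (volume : Measure (EuclideanSpace ℝ (Fin n))).measurePreserving_homeomorphUnitSphereProd
  have h0 : ∫⁻ x, G x = ∫⁻ x : ({0}ᶜ : Set (EuclideanSpace ℝ (Fin n))), G x ∂(volume.comap Subtype.val) := by
    rw [lintegral_subtype_comap (measurableSet_singleton _).compl, restrict_compl_singleton]
  have hm : Measurable fun z : sphere (0 : EuclideanSpace ℝ (Fin n)) 1 × Set.Ioi (0:ℝ) => G ((z.2 : ℝ) • (z.1 : EuclideanSpace ℝ (Fin n))) := by
    fun_prop
  have h2 := h.lintegral_comp hm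
  rw [h0]
  have h3 : ∀ x : ({0}ᶜ : Set (EuclideanSpace ℝ (Fin n))), G x = G ((((homeomorphUnitSphereProd (EuclideanSpace ℝ (Fin n))) x).2 : ℝ) • (((homeomorphUnitSphereProd (EuclideanSpace ℝ (Fin n))) x).1 : EuclideanSpace ℝ (Fin n))) := by
    intro x
    congr 1
    have : ‖(x : EuclideanSpace ℝ (Fin n))‖ ≠ 0 := norm_ne_zero_iff.2 x.2
    simp [smul_smul, this]
  simp_rw [h3]
  rw [h2, lintegral_prod _ hm.aemeasurable]
  refine lintegral_congr fun θ => ?_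
  rw [Measure.volumeIoiPow, lintegral_withDensity_eq_lintegral_mul _ (by fun_prop) (by fun_prop)]
  simp only [finrank_euclideanSpace, Fintype.card_fin, Pi.mul_apply]
  rw [lintegral_subtype_comap measurableSet_Ioi (fun r : ℝ => ENNReal.ofReal (r ^ (n-1)) * G (r • (θ : EuclideanSpace ℝ (Fin n))))]

theorem gauss {V : Type*} [NormedAddCommGroup V] [InnerProductSpace ℝ V] [FiniteDimensional ℝ V]
    [MeasurableSpace V] [BorelSpace V] {b : ℝ} (hb : 0 < b) :
    ∫⁻ v : V, ENNReal.ofReal (rexp (-b * ‖v‖ ^ 2)) = ENNReal.ofReal ((π / b) ^ (Module.finrank ℝ V / 2 : ℝ)) := by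
  rw [← GaussianFourier.integral_rexp_neg_mul_sq_norm hb, ofReal_integral_eq_lintegral_ofReal]
  · by_contra hc
    have := GaussianFourier.integral_rexp_neg_mul_sq_norm (V := V) hb
    rw [integral_undef hc] at this
    have h : 0 < (π / b) ^ (Module.finrank ℝ V / 2 : ℝ) := by positivity
    linarith
  · exact Filter.Eventually.of_forall fun _ => (exp_pos _).le

theorem gam {s c : ℝ} (hs : 0 < s) (hc : 0 < c) :
    ∫⁻ u in Set.Ioi (0:ℝ), ENNReal.ofReal (u ^ (s-1) * rexp (-(c * u))) = ENNReal.ofReal ((1/c) ^ s * Gamma s) := by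
  have h := Real.integral_rpow_mul_exp_neg_mul_Ioi hs hc
  rw [← h, ofReal_integral_eq_lintegral_ofReal]
  · by_contra hcc
    rw [integral_undef hcc] at h
    have h : 0 < (1/c) ^ s * Gamma s := by have := Gamma_pos_of_pos hs; positivity
    linarith
  · refine (ae_restrict_mem measurableSet_Ioi).mono fun u hu => ?_
    have : (0:ℝ) < u := hu
    positivity

theorem Wint {V : Type*} [NormedAddCommGroup V] [InnerProductSpace ℝ V] [FiniteDimensional ℝ V]
    [MeasurableSpace V] [BorelSpace V] {s m c : ℝ} (hm : (Module.finrank ℝ V : ℝ) = m) (_hm0 : 0 ≤ m) (hc : 0 < c) (hs : m / 2 < s) :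
    ∫⁻ v : V, ENNReal.ofReal ((c + ‖v‖ ^ 2) ^ (-s)) =
     ENNReal.ofReal (π ^ (m / 2) * Gamma (s - m/2) / Gamma s * c ^ (m/2 - s)) := by
  have hs0 : 0 < s := by linarith
  have hG := Gamma_pos_of_pos hs0
  have h1 : ∀ v : V, ENNReal.ofReal ((c + ‖v‖ ^ 2) ^ (-s)) = ENNReal.ofReal (1 / Gamma s) *
      ∫⁻ u in Set.Ioi (0:ℝ), ENNReal.ofReal (u ^ (s-1) * rexp (-((c + ‖v‖^2) * u))) := by
    intro v
    have : 0 < c + ‖v‖^2 := by positivity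
    rw [gam hs0 this, ← ENNReal.ofReal_mul (by positivity), one_div (c + _), Real.inv_rpow this.le, Real.rpow_neg this.le]
    congr 1
    field_simp
  simp_rw [h1]
  rw [lintegral_const_mul' _ _ ENNReal.ofReal_ne_top, lintegral_lintegral_swap (by fun_prop)]
  have h2 : ∀ u ∈ Set.Ioi (0:ℝ), ∫⁻ v : V, ENNReal.ofReal (u ^ (s-1) * rexp (-((c + ‖v‖^2) * u))) =
      ENNReal.ofReal (π ^ (m/2)) * ENNReal.ofReal (u ^ (s - m/2 - 1) * rexp (-(c * u))) := by
    intro u (hu : 0 < u)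
    have : ∀ v : V, ENNReal.ofReal (u ^ (s-1) * rexp (-((c + ‖v‖^2) * u))) = ENNReal.ofReal (u ^ (s-1) * rexp (-(c * u))) * ENNReal.ofReal (rexp (-u * ‖v‖ ^ 2)) := by
      intro v
      rw [← ENNReal.ofReal_mul (by positivity), mul_assoc, ← Real.exp_add]
      ring_nf
    simp_rw [this]
    rw [lintegral_const_mul' _ _ ENNReal.ofReal_ne_top, gauss hu, ← ENNReal.ofReal_mul (by positivity), ← ENNReal.ofReal_mul (by positivity), hm,
      Real.div_rpow pi_pos.le hu.le, show s - m/2 - 1 = (s - 1) - m/2 by ring, Real.rpow_sub hu (s - 1) (m/2)]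
    congr 1
    ring
  rw [setLIntegral_congr_fun measurableSet_Ioi h2, lintegral_const_mul' _ _ ENNReal.ofReal_ne_top, gam (by linarith) hc,
    ← ENNReal.ofReal_mul (by positivity), ← ENNReal.ofReal_mul (by positivity)]
  congr 1
  rw [one_div c, Real.inv_rpow hc.le, ← Real.rpow_neg hc.le, neg_sub]
  field_simp

theorem gauss1 {q : ℝ} (hq : -1 < q) :
    ∫⁻ r in Set.Ioi (0:ℝ), ENNReal.ofReal (r ^ q * rexp (-r ^ 2)) =
      ENNReal.ofReal (1 / 2 * Gamma ((q + 1) / 2)) := by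
  have h := integral_rpow_mul_exp_neg_rpow (p := 2) (by norm_num) hq
  simp only [Real.rpow_two] at h
  rw [← h, ofReal_integral_eq_lintegral_ofReal]
  · by_contra hcc
    rw [integral_undef hcc] at h
    have h : 0 < 1 / 2 * Gamma ((q + 1) / 2) := by
      have := Gamma_pos_of_pos (s := (q+1)/2) (by linarith)
      positivity
    linarith
  · refine (ae_restrict_mem measurableSet_Ioi).mono fun u hu => ?_
    have : (0:ℝ) < u := hu
    positivity

theorem gauss2 {q : ℝ} (hq : -1 < q) :
    ∫⁻ t : ℝ, ENNReal.ofReal |t| ^ q * ENNReal.ofReal (rexp (-t ^ 2)) =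
      ENNReal.ofReal (Gamma ((q + 1) / 2)) := by
  have hI : ∫⁻ t in Set.Ioi (0:ℝ), ENNReal.ofReal |t| ^ q * ENNReal.ofReal (rexp (-t ^ 2)) =
      ENNReal.ofReal (1 / 2 * Gamma ((q + 1) / 2)) := by
    rw [← gauss1 hq]
    refine setLIntegral_congr_fun measurableSet_Ioi fun t (ht : 0 < t) => ?_
    rw [abs_of_pos ht, ENNReal.ofReal_rpow_of_pos ht, ← ENNReal.ofReal_mul (by positivity)]
  have hJ : ∫⁻ t in (Set.Ioi (0:ℝ))ᶜ, ENNReal.ofReal |t| ^ q * ENNReal.ofReal (rexp (-t ^ 2)) =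
      ENNReal.ofReal (1 / 2 * Gamma ((q + 1) / 2)) := by
    rw [← hI, Set.compl_Ioi, setLIntegral_congr Iio_ae_eq_Iic.symm]
    have := (Measure.measurePreserving_neg (volume : Measure ℝ)).setLIntegral_comp_preimage
      (s := Set.Ioi (0:ℝ)) measurableSet_Ioi
      (f := fun t => ENNReal.ofReal |t| ^ q * ENNReal.ofReal (rexp (-t ^ 2))) (by fun_prop)
    rw [← this]
    simp
  rw [← lintegral_add_compl _ (measurableSet_Ioi (a := (0:ℝ))), hI, hJ, ← two_mul,
    ← ENNReal.ofReal_ofNat 2, ← ENNReal.ofReal_mul (by norm_num)]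
  congr 1
  ring

theorem finrank_perp (e : EuclideanSpace ℝ (Fin n)) (he : ‖e‖ = 1) : (Module.finrank ℝ (ℝ ∙ e)ᗮ : ℝ) = n - 1 := by
  have h := (ℝ ∙ e).finrank_add_finrank_orthogonal
  rw [finrank_span_singleton (by rintro rfl; simp at he), finrank_euclideanSpace,
    Fintype.card_fin] at h
  have : (1 : ℝ) + (Module.finrank ℝ (ℝ ∙ e)ᗮ : ℝ) = n := by exact_mod_cast h
  linarith

theorem inner_dec (e : EuclideanSpace ℝ (Fin n)) (he : ‖e‖ = 1) (t : ℝ) (y : (ℝ ∙ e)ᗮ) :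
    inner ℝ e (t • e + (y : EuclideanSpace ℝ (Fin n))) = t := by
  have h0 : inner ℝ e (y : EuclideanSpace ℝ (Fin n)) = 0 := Submodule.mem_orthogonal_singleton_iff_inner_right.1 y.2
  rw [inner_add_right, h0, inner_smul_right, real_inner_self_eq_norm_sq, he]
  simp

theorem norm_dec (e : EuclideanSpace ℝ (Fin n)) (he : ‖e‖ = 1) (t : ℝ) (y : (ℝ ∙ e)ᗮ) :
    ‖t • e + (y : EuclideanSpace ℝ (Fin n))‖ ^ 2 = t ^ 2 + ‖y‖ ^ 2 := by
  have h0 : inner ℝ e (y : EuclideanSpace ℝ (Fin n)) = 0 := Submodule.mem_orthogonal_singleton_iff_inner_right.1 y.2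
  rw [norm_add_sq_real, inner_smul_left, h0, norm_smul, he]
  simp

theorem sphA (hn : 1 ≤ n) {a : ℝ} (ha : -1 < a) (e : EuclideanSpace ℝ (Fin n)) (he : ‖e‖ = 1) :
    (∫⁻ θ, ENNReal.ofReal |inner ℝ e (θ : EuclideanSpace ℝ (Fin n))| ^ a ∂(volume : Measure (EuclideanSpace ℝ (Fin n))).toSphere) *
      ENNReal.ofReal (1 / 2 * Gamma ((n + a) / 2)) =
    ENNReal.ofReal (Gamma ((a + 1) / 2)) * ENNReal.ofReal (π ^ (((n : ℝ) - 1) / 2)) := by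
  have hm : Measurable fun y : EuclideanSpace ℝ (Fin n) =>
      ENNReal.ofReal |inner ℝ e y| ^ a * ENNReal.ofReal (rexp (-‖y‖ ^ 2)) := by
    fun_prop
  have h1 := polar hn _ hm
  rw [← decomp e he _ hm] at h1
  have hn' : (1:ℝ) ≤ n := by exact_mod_cast hn
  have hL : ∀ t : ℝ, ∫⁻ y : (ℝ ∙ e)ᗮ, ENNReal.ofReal |inner ℝ e (t • e + (y : EuclideanSpace ℝ (Fin n)))| ^ a *
        ENNReal.ofReal (rexp (-‖t • e + (y : EuclideanSpace ℝ (Fin n))‖ ^ 2)) =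
      (ENNReal.ofReal |t| ^ a * ENNReal.ofReal (rexp (-t ^ 2))) *
        ENNReal.ofReal (π ^ (((n : ℝ) - 1) / 2)) := by
    intro t
    have : ∀ y : (ℝ ∙ e)ᗮ, ENNReal.ofReal |inner ℝ e (t • e + (y : EuclideanSpace ℝ (Fin n)))| ^ a *
        ENNReal.ofReal (rexp (-‖t • e + (y : EuclideanSpace ℝ (Fin n))‖ ^ 2)) =
       (ENNReal.ofReal |t| ^ a * ENNReal.ofReal (rexp (-t ^ 2))) *
        ENNReal.ofReal (rexp (-1 * ‖y‖ ^ 2)) := by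
      intro y
      rw [norm_dec e he, inner_dec e he, mul_assoc, ← ENNReal.ofReal_mul (by positivity),
        ← Real.exp_add]
      ring_nf
    simp_rw [this]
    rw [lintegral_const_mul _ (by fun_prop), gauss one_pos, finrank_perp e he, div_one]
  have hR : ∀ θ : sphere (0 : EuclideanSpace ℝ (Fin n)) 1, ∫⁻ r in Set.Ioi (0:ℝ), ENNReal.ofReal (r ^ (n-1)) *
      (ENNReal.ofReal |inner ℝ e (r • (θ : EuclideanSpace ℝ (Fin n)))| ^ a *
        ENNReal.ofReal (rexp (-‖r • (θ : EuclideanSpace ℝ (Fin n))‖ ^ 2))) =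
      ENNReal.ofReal |inner ℝ e (θ : EuclideanSpace ℝ (Fin n))| ^ a *
        ENNReal.ofReal (1 / 2 * Gamma ((n + a) / 2)) := by
    intro θ
    have : ∀ r ∈ Set.Ioi (0:ℝ), ENNReal.ofReal (r ^ (n-1)) *
      (ENNReal.ofReal |inner ℝ e (r • (θ : EuclideanSpace ℝ (Fin n)))| ^ a *
        ENNReal.ofReal (rexp (-‖r • (θ : EuclideanSpace ℝ (Fin n))‖ ^ 2))) =
      ENNReal.ofReal |inner ℝ e (θ : EuclideanSpace ℝ (Fin n))| ^ a *
        ENNReal.ofReal (r ^ ((n : ℝ) - 1 + a) * rexp (-r ^ 2)) := by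
      intro r (hr : 0 < r)
      rw [inner_smul_right, abs_mul, abs_of_pos hr, ENNReal.ofReal_mul hr.le,
        ENNReal.mul_rpow_of_ne_top ENNReal.ofReal_ne_top ENNReal.ofReal_ne_top,
        norm_smul, norm_eq_of_mem_sphere, mul_one, Real.norm_eq_abs, sq_abs,
        ENNReal.ofReal_rpow_of_pos hr, ENNReal.ofReal_mul (by positivity), Real.rpow_add hr,
        ENNReal.ofReal_mul (by positivity), ← Nat.cast_pred hn, Real.rpow_natCast]
      ring
    rw [setLIntegral_congr_fun measurableSet_Ioi this, lintegral_const_mul _ (by fun_prop),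
      gauss1 (by linarith)]
    ring_nf
  simp_rw [hL, hR] at h1
  rw [lintegral_mul_const _ (by fun_prop), gauss2 ha, lintegral_mul_const _ (by fun_prop)] at h1
  exact h1.symm

theorem sphC (hn : 1 ≤ n) {a : ℝ} (ha : -1 < a) (x : EuclideanSpace ℝ (Fin n)) (hx : x ≠ 0) :
    (∫⁻ θ, ENNReal.ofReal |inner ℝ x (θ : EuclideanSpace ℝ (Fin n))| ^ a ∂(sphMeasure n)) =
    ENNReal.ofReal (Gamma (n / 2) / Gamma (1 / 2) * Gamma ((a + 1) / 2) / Gamma ((n + a) / 2)) *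
      ENNReal.ofReal ‖x‖ ^ a := by
  have hn' : (1:ℝ) ≤ n := by exact_mod_cast hn
  have hx0 : 0 < ‖x‖ := norm_pos_iff.2 hx
  obtain ⟨e, he⟩ : ∃ e : EuclideanSpace ℝ (Fin n), e = ‖x‖⁻¹ • x := ⟨_, rfl⟩
  have he1 : ‖e‖ = 1 := by rw [he, norm_smul, norm_inv, norm_norm, inv_mul_cancel₀ hx0.ne']
  have hxe : x = ‖x‖ • e := by rw [he, smul_smul, mul_inv_cancel₀ hx0.ne', one_smul]
  have h1 : ∀ θ : sphere (0 : EuclideanSpace ℝ (Fin n)) 1, ENNReal.ofReal |inner ℝ x (θ : EuclideanSpace ℝ (Fin n))| ^ a =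
      ENNReal.ofReal ‖x‖ ^ a * ENNReal.ofReal |inner ℝ e (θ : EuclideanSpace ℝ (Fin n))| ^ a := by
    intro θ
    rw [← ENNReal.mul_rpow_of_ne_top ENNReal.ofReal_ne_top ENNReal.ofReal_ne_top,
      ← ENNReal.ofReal_mul hx0.le]
    congr 2
    conv_lhs => rw [hxe]
    rw [inner_smul_left, abs_mul]
    simp
  simp_rw [h1]
  rw [lintegral_const_mul _ (by fun_prop), sphMeasure, lintegral_smul_measure, mul_comm]
  congr 1
  have hA := sphA hn ha e he1
  have h0 := sphA hn (show (-1:ℝ) < 0 by norm_num) e he1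
  simp only [ENNReal.rpow_zero, lintegral_const, one_mul, add_zero, zero_add] at h0
  have g1 := Gamma_pos_of_pos (s := (n:ℝ)/2) (by linarith)
  have g2 := Gamma_pos_of_pos (s := (1:ℝ)/2) (by linarith)
  have g3 := Gamma_pos_of_pos (s := (a+1)/2) (by linarith)
  have g4 := Gamma_pos_of_pos (s := (n+a)/2) (by linarith)
  rw [← ENNReal.ofReal_mul g3.le, mul_comm, ← ENNReal.eq_div_iff (by simpa using g4) ENNReal.ofReal_ne_top,
    ← ENNReal.ofReal_div_of_pos (by positivity)] at hA
  rw [← ENNReal.ofReal_mul g2.le, mul_comm, ← ENNReal.eq_div_iff (by simpa using g1) ENNReal.ofReal_ne_top,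
    ← ENNReal.ofReal_div_of_pos (by positivity)] at h0
  rw [hA, h0, ← ENNReal.ofReal_inv_of_pos (by positivity), smul_eq_mul,
    ← ENNReal.ofReal_mul (by positivity)]
  congr 1
  field_simp

theorem holder_w {V : Type*} [MeasurableSpace V] (κ : Measure V) {p : ℝ} (hp : 1 ≤ p)
    (F w : V → ℝ≥0∞) (hF : Measurable F) (hw : Measurable w) (h0 : ∀ v, w v ≠ 0)
    (ht : ∀ v, w v ≠ ⊤) :
    (∫⁻ v, F v ∂κ) ^ p ≤ (∫⁻ v, w v ∂κ) ^ (p - 1) * ∫⁻ v, F v ^ p * w v ^ (1 - p) ∂κ := by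
  rcases hp.eq_or_lt with rfl | hp
  · simp
  have hp0 : 0 < p := by linarith
  have hp1 : 0 < p - 1 := by linarith
  have hc : p.HolderConjugate (p / (p - 1)) := Real.HolderConjugate.conjExponent hp
  have h := ENNReal.lintegral_mul_le_Lp_mul_Lq κ hc
    (f := fun v => F v * w v ^ (-((p - 1) / p))) (g := fun v => w v ^ ((p - 1) / p))
    (by fun_prop) (by fun_prop)
  have e1 : ∀ v, ((fun v => F v * w v ^ (-((p - 1) / p))) * (fun v => w v ^ ((p - 1) / p))) v
      = F v := by
    intro v
    simp only [Pi.mul_apply]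
    rw [mul_assoc, ← ENNReal.rpow_add _ _ (h0 v) (ht v)]
    simp
  have e2 : ∀ v, (F v * w v ^ (-((p - 1) / p))) ^ p = F v ^ p * w v ^ (1 - p) := by
    intro v
    rw [ENNReal.mul_rpow_of_nonneg _ _ hp0.le, ← ENNReal.rpow_mul]
    congr 2
    field_simp
    ring
  have e3 : ∀ v, (w v ^ ((p - 1) / p)) ^ (p / (p - 1)) = w v := by
    intro v
    rw [← ENNReal.rpow_mul, show (p - 1) / p * (p / (p - 1)) = 1 by field_simp, ENNReal.rpow_one]
  simp_rw [e1, e2, e3] at h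
  calc _ ≤ _ := ENNReal.rpow_le_rpow h hp0.le
    _ = _ := by
      rw [ENNReal.mul_rpow_of_nonneg _ _ hp0.le, ← ENNReal.rpow_mul, ← ENNReal.rpow_mul,
        show 1 / p * p = 1 by field_simp, show 1 / (p / (p - 1)) * p = p - 1 by field_simp,
        ENNReal.rpow_one, mul_comm]

theorem radon_bound (hn : 2 ≤ n) {p : ℝ} (hp : 1 ≤ p) {ν s a : ℝ} (hs : ((n:ℝ) - 1) / 2 < s)
    (ha : a = ν * p + ((n:ℝ) - 1 - 2 * s) * (p - 1))
    (f : (EuclideanSpace ℝ (Fin n)) → ℝ≥0∞) (hf : Measurable f) (θ : sphere (0 : EuclideanSpace ℝ (Fin n)) 1) (t : ℝ) (ht : t ≠ 0) :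
    Radon n f θ t ^ p * ENNReal.ofReal |t| ^ (ν * p) ≤
      ENNReal.ofReal (π ^ (((n:ℝ) - 1) / 2) * Gamma (s - ((n:ℝ) - 1) / 2) / Gamma s) ^ (p - 1) *
      ∫⁻ y : (ℝ ∙ (θ : EuclideanSpace ℝ (Fin n)))ᗮ,
        ENNReal.ofReal |inner ℝ (t • (θ : EuclideanSpace ℝ (Fin n)) + (y : EuclideanSpace ℝ (Fin n))) (θ : EuclideanSpace ℝ (Fin n))| ^ a *
        (f (t • (θ : EuclideanSpace ℝ (Fin n)) + y) ^ p * ENNReal.ofReal ‖t • (θ : EuclideanSpace ℝ (Fin n)) + (y : EuclideanSpace ℝ (Fin n))‖ ^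
          (2 * s * (p - 1))) := by
  have hn' : (2:ℝ) ≤ n := by exact_mod_cast hn
  have hs0 : 0 < s := by linarith
  have he : ‖(θ : EuclideanSpace ℝ (Fin n))‖ = 1 := norm_eq_of_mem_sphere θ
  have ht2 : 0 < t ^ 2 := by positivity
  have hat : 0 < |t| := abs_pos.2 ht
  have hat0 : ENNReal.ofReal |t| ≠ 0 := by simpa using ht
  have hpos : ∀ y : (ℝ ∙ (θ : EuclideanSpace ℝ (Fin n)))ᗮ, 0 < t ^ 2 + ‖y‖ ^ 2 := fun y => by positivity
  have hW := Wint (V := (ℝ ∙ (θ : EuclideanSpace ℝ (Fin n)))ᗮ) (s := s) (finrank_perp _ he) (by linarith) ht2 hs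
  have H := holder_w (volume : Measure (ℝ ∙ (θ : EuclideanSpace ℝ (Fin n)))ᗮ) hp
    (fun y => f (t • (θ : EuclideanSpace ℝ (Fin n)) + y)) (fun y => ENNReal.ofReal ((t ^ 2 + ‖y‖ ^ 2) ^ (-s)))
    (by fun_prop) (by fun_prop)
    (fun y => by
      have := hpos y
      simpa using Real.rpow_pos_of_pos this _)
    (fun y => ENNReal.ofReal_ne_top)
  have e1 : ∀ y : (ℝ ∙ (θ : EuclideanSpace ℝ (Fin n)))ᗮ, ENNReal.ofReal ((t ^ 2 + ‖y‖ ^ 2) ^ (-s)) ^ (1 - p) =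
      ENNReal.ofReal ‖t • (θ : EuclideanSpace ℝ (Fin n)) + (y : EuclideanSpace ℝ (Fin n))‖ ^ (2 * s * (p - 1)) := by
    intro y
    have h1 := hpos y
    have h2 : 0 < ‖t • (θ : EuclideanSpace ℝ (Fin n)) + (y : EuclideanSpace ℝ (Fin n))‖ := by
      have := norm_dec (θ : EuclideanSpace ℝ (Fin n)) he t y
      by_contra hc
      have h3 : ‖t • (θ : EuclideanSpace ℝ (Fin n)) + (y : EuclideanSpace ℝ (Fin n))‖ = 0 := le_antisymm (not_lt.1 hc) (norm_nonneg _)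
      rw [h3] at this
      linarith
    rw [← norm_dec (θ : EuclideanSpace ℝ (Fin n)) he t y, ENNReal.ofReal_rpow_of_pos (by positivity),
      ENNReal.ofReal_rpow_of_pos h2, ← Real.rpow_natCast, ← Real.rpow_mul h2.le,
      ← Real.rpow_mul h2.le]
    congr 2
    push_cast
    ring
  have e2 : ENNReal.ofReal (π ^ (((n:ℝ) - 1) / 2) * Gamma (s - ((n:ℝ) - 1) / 2) / Gamma s *
      (t ^ 2) ^ (((n:ℝ) - 1) / 2 - s)) =
      ENNReal.ofReal (π ^ (((n:ℝ) - 1) / 2) * Gamma (s - ((n:ℝ) - 1) / 2) / Gamma s) *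
      ENNReal.ofReal |t| ^ ((n:ℝ) - 1 - 2 * s) := by
    have g1 := Gamma_pos_of_pos hs0
    have g2 := Gamma_pos_of_pos (s := s - ((n:ℝ) - 1) / 2) (by linarith)
    rw [ENNReal.ofReal_mul (by positivity), ENNReal.ofReal_rpow_of_pos hat, ← sq_abs t,
      ← Real.rpow_natCast, ← Real.rpow_mul hat.le]
    congr 3
    push_cast
    ring
  rw [hW, e2] at H
  simp_rw [e1] at H
  have e3 : ∀ y : (ℝ ∙ (θ : EuclideanSpace ℝ (Fin n)))ᗮ, inner ℝ (t • (θ : EuclideanSpace ℝ (Fin n)) + (y : EuclideanSpace ℝ (Fin n))) (θ : EuclideanSpace ℝ (Fin n)) = t :=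
    fun y => by rw [real_inner_comm, inner_dec _ he]
  simp_rw [e3]
  rw [lintegral_const_mul _ (by fun_prop)]
  calc _ ≤ _ := mul_le_mul_left H (ENNReal.ofReal |t| ^ (ν * p))
    _ = _ := by
      rw [ENNReal.mul_rpow_of_nonneg _ _ (by linarith), ← ENNReal.rpow_mul, ha,
        ENNReal.rpow_add _ _ hat0 ENNReal.ofReal_ne_top]
      ring

end helpers

/-- Weighted `L^p` norm estimate for the hyperplane Radon transform (case `k = n-1` of
Rubin's weighted norm estimate, boundedness part). -/
theorem stmt0 (n : ℕ) (hn : 2 ≤ n) (p : ℝ) (hp : 1 ≤ p) (μ ν ω : ℝ)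
    (hμ : μ > ((n : ℝ) - 1) - n / p)
    (hν : ν = μ - ((n : ℝ) - 1) * (1 - 1 / p))
    (hω : ω = Real.pi ^ (((n : ℝ) - 1) * (1 - 1 / p) / 2) *
      (Real.Gamma ((n : ℝ) / 2) / Real.Gamma (1 / 2)) ^ (1 / p) *
      Real.Gamma ((μ + (n : ℝ) / p - n + 1) / 2) / Real.Gamma ((μ + (n : ℝ) / p) / 2))
    (f : EuclideanSpace ℝ (Fin n) → ℝ≥0∞) (hf : Measurable f) :
    (∫⁻ θ, ∫⁻ t : ℝ, Radon n f θ t ^ p * ENNReal.ofReal |t| ^ (ν * p) ∂volume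
        ∂(sphMeasure n)) ^ (1 / p) ≤
      ENNReal.ofReal ω *
        (∫⁻ x, f x ^ p * ENNReal.ofReal ‖x‖ ^ (μ * p)) ^ (1 / p) := by
  have hn' : (2:ℝ) ≤ n := by exact_mod_cast hn
  have hp0 : 0 < p := by linarith
  obtain ⟨a, ha⟩ : ∃ a : ℝ, a = μ + n / p - n := ⟨_, rfl⟩
  obtain ⟨s, hs⟩ : ∃ s : ℝ, s = (μ + n / p) / 2 := ⟨_, rfl⟩
  have ha1 : -1 < a := by linarith
  have hs1 : ((n:ℝ) - 1) / 2 < s := by linarith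
  have hnp : (n : ℝ) / p * p = n := by field_simp
  have hop : 1 / p * p = 1 := by field_simp
  have hexp : a = ν * p + ((n:ℝ) - 1 - 2 * s) * (p - 1) := by
    rw [ha, hν, hs]
    linear_combination (-((n:ℝ) - 1)) * hop + hnp
  have hexp2 : a + 2 * s * (p - 1) = μ * p := by
    rw [ha, hs]
    linear_combination hnp
  have g1 := Gamma_pos_of_pos (s := (n:ℝ)/2) (by linarith)
  have g2 := Gamma_pos_of_pos (s := (1:ℝ)/2) (by linarith)
  have g3 := Gamma_pos_of_pos (s := (a+1)/2) (by linarith)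
  have g4 := Gamma_pos_of_pos (s := (n+a)/2) (by linarith)
  obtain ⟨K, hK⟩ : ∃ K : ℝ,
    K = π ^ (((n:ℝ) - 1) / 2) * Gamma (s - ((n:ℝ) - 1) / 2) / Gamma s := ⟨_, rfl⟩
  obtain ⟨C, hC⟩ : ∃ C : ℝ,
    C = Gamma (n / 2) / Gamma (1 / 2) * Gamma ((a + 1) / 2) / Gamma ((n + a) / 2) := ⟨_, rfl⟩
  obtain ⟨g, hg⟩ : ∃ g : EuclideanSpace ℝ (Fin n) → ℝ≥0∞,
    g = fun x => f x ^ p * ENNReal.ofReal ‖x‖ ^ (2 * s * (p - 1)) := ⟨_, rfl⟩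
  have hgm : Measurable g := by rw [hg]; fun_prop
  have hCpos : 0 < C := by rw [hC]; positivity
  have hes : s = (n + a) / 2 := by rw [hs, ha]; ring
  have hes2 : s - ((n:ℝ) - 1) / 2 = (a + 1) / 2 := by rw [hs, ha]; ring
  have hKpos : 0 < K := by rw [hK, hes2, hes]; positivity
  have hωC : K ^ (p - 1) * C = ω ^ p := by
    rw [hω, hK, hC, hes2, hes, show (μ + (n : ℝ) / p - n + 1) / 2 = (a + 1) / 2 by rw [ha],
      show (μ + (n : ℝ) / p) / 2 = (n + a) / 2 by rw [ha]; ring]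
    obtain ⟨Z, hZ⟩ : ∃ Z : ℝ, Z = Gamma ((a + 1) / 2) / Gamma ((n + a) / 2) := ⟨_, rfl⟩
    have hZ0 : 0 < Z := by rw [hZ]; positivity
    rw [mul_div_assoc, mul_div_assoc, mul_div_assoc, ← hZ,
      Real.mul_rpow (by positivity) hZ0.le, Real.mul_rpow (by positivity) hZ0.le,
      Real.mul_rpow (by positivity) (by positivity), ← Real.rpow_mul pi_pos.le,
      ← Real.rpow_mul pi_pos.le, ← Real.rpow_mul (by positivity), hop, Real.rpow_one,
      show ((n : ℝ) - 1) * (1 - 1 / p) / 2 * p = ((n : ℝ) - 1) / 2 * (p - 1) by field_simp,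
      Real.rpow_sub_one hZ0.ne']
    field_simp
  have hω0 : 0 ≤ ω := by
    rw [hω, show (μ + (n : ℝ) / p - n + 1) / 2 = (a + 1) / 2 by rw [ha],
      show (μ + (n : ℝ) / p) / 2 = (n + a) / 2 by rw [ha]; ring]
    positivity
  have hae : ∀ᵐ t : ℝ, t ≠ 0 := Measure.ae_ne volume 0
  have haex : ∀ᵐ x : EuclideanSpace ℝ (Fin n), x ≠ 0 := by
    have : Nonempty (Fin n) := ⟨⟨0, by omega⟩⟩
    exact Measure.ae_ne volume 0
  have : SFinite (sphMeasure n) := by unfold sphMeasure; infer_instance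
  have main : (∫⁻ θ, ∫⁻ t : ℝ, Radon n f θ t ^ p * ENNReal.ofReal |t| ^ (ν * p) ∂volume
        ∂(sphMeasure n)) ≤
      ENNReal.ofReal ω ^ p * ∫⁻ x, f x ^ p * ENNReal.ofReal ‖x‖ ^ (μ * p) := by
    calc _ ≤ ∫⁻ θ, ∫⁻ t : ℝ, ENNReal.ofReal K ^ (p - 1) *
          ∫⁻ y : (ℝ ∙ (θ : EuclideanSpace ℝ (Fin n)))ᗮ,
          ENNReal.ofReal |inner ℝ (t • (θ : EuclideanSpace ℝ (Fin n)) +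
            (y : EuclideanSpace ℝ (Fin n))) (θ : EuclideanSpace ℝ (Fin n))| ^ a *
          g (t • (θ : EuclideanSpace ℝ (Fin n)) + y) ∂volume ∂volume ∂(sphMeasure n) := by
          refine lintegral_mono fun θ => lintegral_mono_ae ?_
          filter_upwards [hae] with t ht
          rw [hK, hg]
          exact radon_bound hn hp hs1 hexp f hf θ t ht
      _ = ∫⁻ θ, ENNReal.ofReal K ^ (p - 1) * ∫⁻ x : EuclideanSpace ℝ (Fin n),
          ENNReal.ofReal |inner ℝ x (θ : EuclideanSpace ℝ (Fin n))| ^ a * g x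
          ∂volume ∂(sphMeasure n) := by
          refine lintegral_congr fun θ => ?_
          rw [lintegral_const_mul' _ _
            (ENNReal.rpow_ne_top_of_nonneg (by linarith) ENNReal.ofReal_ne_top),
            ← decomp (θ : EuclideanSpace ℝ (Fin n)) (norm_eq_of_mem_sphere θ) _ (by fun_prop)]
      _ = ENNReal.ofReal K ^ (p - 1) * ∫⁻ x : EuclideanSpace ℝ (Fin n), ∫⁻ θ,
          ENNReal.ofReal |inner ℝ x (θ : EuclideanSpace ℝ (Fin n))| ^ a * g x
          ∂(sphMeasure n) ∂volume := by
          rw [lintegral_const_mul' _ _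
            (ENNReal.rpow_ne_top_of_nonneg (by linarith) ENNReal.ofReal_ne_top),
            lintegral_lintegral_swap (by fun_prop)]
      _ = ENNReal.ofReal K ^ (p - 1) * ∫⁻ x : EuclideanSpace ℝ (Fin n),
          ENNReal.ofReal C * (f x ^ p * ENNReal.ofReal ‖x‖ ^ (μ * p)) := by
          congr 1
          refine lintegral_congr_ae ?_
          filter_upwards [haex] with x hx
          rw [lintegral_mul_const _ (by fun_prop), sphC (by omega) ha1 x hx, ← hC, hg, ← hexp2,
            ENNReal.rpow_add _ _ (by simpa using hx) ENNReal.ofReal_ne_top]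
          ring
      _ = _ := by
          rw [lintegral_const_mul' _ _ ENNReal.ofReal_ne_top, ← mul_assoc,
            ENNReal.ofReal_rpow_of_pos hKpos, ← ENNReal.ofReal_mul (by positivity), hωC,
            ENNReal.ofReal_rpow_of_nonneg hω0 hp0.le]
  calc _ ≤ _ := ENNReal.rpow_le_rpow main (by positivity : (0:ℝ) ≤ 1 / p)
    _ = _ := by
      rw [ENNReal.mul_rpow_of_nonneg _ _ (by positivity), ← ENNReal.rpow_mul,
        show p * (1 / p) = 1 by field_simp, ENNReal.rpow_one]
end
end

section
/- Let μ be a real number with μ > −1. Then for every measurable function f : ℝ^n → [0,∞], ∫_{S^{n-1}} ∫_ℝ Rf(θ,t) · |t|^μ dt d*θ = (Γ(n/2)/Γ(1/2)) · (Γ((μ+1)/2)/Γ((μ+n)/2)) · ∫_{ℝ^n} f(x) |x|^μ dx, where both sides are elements of [0,∞] and the equality holds in [0,∞]. (This is the exact L^1 identity for the k-plane transform in the case k = n−1.) -/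
open MeasureTheory Metric Real
open scoped ENNReal

noncomputable section

lemma slice_lemma {n : ℕ} (u : EuclideanSpace ℝ (Fin n)) (hu : ‖u‖ = 1)
    (g : EuclideanSpace ℝ (Fin n) → ℝ≥0∞) (hg : Measurable g) :
    ∫⁻ x, g x = ∫⁻ t : ℝ, ∫⁻ y : ((ℝ ∙ u)ᗮ), g (t • u + (y : EuclideanSpace ℝ (Fin n))) := by
  have h1 := ((LinearIsometryEquiv.toSpanUnitSingleton (𝕜 := ℝ) u hu).measurePreserving).prod
    (MeasurePreserving.id (volume : Measure ((ℝ ∙ u)ᗮ)))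
  have h2 := ((ℝ ∙ u).orthogonalDecomposition.symm.measurePreserving).comp
    ((WithLp.volume_preserving_toLp (ℝ ∙ u) ((ℝ ∙ u)ᗮ)).comp h1)
  rw [← h2.lintegral_comp hg, lintegral_prod]
  · refine lintegral_congr fun t => lintegral_congr fun y => ?_
    congr 1
  · exact (hg.comp h2.measurable).aemeasurable

lemma polar_lemma {n : ℕ} (hn : n ≠ 0)
    (g : EuclideanSpace ℝ (Fin n) → ℝ≥0∞) (hg : Measurable g) :
    ∫⁻ x, g x = ∫⁻ θ, ∫⁻ r in Set.Ioi (0 : ℝ), ENNReal.ofReal (r ^ (n - 1)) *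
      g (r • (θ : EuclideanSpace ℝ (Fin n))) ∂volume
      ∂(volume : Measure (EuclideanSpace ℝ (Fin n))).toSphere := by
  have : Nonempty (Fin n) := ⟨⟨0, Nat.pos_of_ne_zero hn⟩⟩
  have hmp := (volume : Measure (EuclideanSpace ℝ (Fin n))).measurePreserving_homeomorphUnitSphereProd
  have hm : Measurable (fun p : sphere (0 : EuclideanSpace ℝ (Fin n)) 1 × Set.Ioi (0 : ℝ) =>
      g ((p.2 : ℝ) • (p.1 : EuclideanSpace ℝ (Fin n)))) := by fun_prop
  calc ∫⁻ x, g x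
      = ∫⁻ x : ({(0)}ᶜ : Set (EuclideanSpace ℝ (Fin n))), g x
          ∂((volume : Measure (EuclideanSpace ℝ (Fin n))).comap Subtype.val) := by
        rw [lintegral_subtype_comap (measurableSet_singleton _).compl g,
          restrict_compl_singleton]
    _ = ∫⁻ p, g ((p.2 : ℝ) • (p.1 : EuclideanSpace ℝ (Fin n)))
          ∂((volume : Measure (EuclideanSpace ℝ (Fin n))).toSphere.prod (.volumeIoiPow (Module.finrank ℝ (EuclideanSpace ℝ (Fin n)) - 1))) := by
        rw [← hmp.lintegral_comp hm]
        refine lintegral_congr fun x => ?_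
        congr 1
        have hx : ‖(x : EuclideanSpace ℝ (Fin n))‖ ≠ 0 := norm_ne_zero_iff.2 x.2
        simp [smul_smul, hx]
    _ = _ := by
        rw [lintegral_prod _ hm.aemeasurable]
        refine lintegral_congr fun θ => ?_
        have hmθ : Measurable (fun r : ℝ => g (r • (θ : EuclideanSpace ℝ (Fin n)))) := by fun_prop
        rw [Measure.volumeIoiPow, lintegral_withDensity_eq_lintegral_mul _ (by fun_prop) (by fun_prop)]
        simp only [Pi.mul_apply, finrank_euclideanSpace, Fintype.card_fin]
        rw [lintegral_subtype_comap measurableSet_Ioi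
          (fun r : ℝ => ENNReal.ofReal (r ^ (n - 1)) * g (r • (θ : EuclideanSpace ℝ (Fin n))))]

lemma gauss_Ioi (q : ℝ) (hq : -1 < q) :
    ∫⁻ r in Set.Ioi (0 : ℝ), ENNReal.ofReal (rexp (-r ^ 2)) * ENNReal.ofReal |r| ^ q =
      ENNReal.ofReal (1 / 2 * Real.Gamma ((q + 1) / 2)) := by
  rw [← integral_rpow_mul_exp_neg_rpow two_pos hq, ofReal_integral_eq_lintegral_ofReal
    (integrableOn_rpow_mul_exp_neg_rpow hq two_pos)]
  · refine setLIntegral_congr_fun measurableSet_Ioi fun r hr => ?_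
    have hr : 0 < r := hr
    rw [abs_of_pos hr, ENNReal.ofReal_rpow_of_pos hr, ← ENNReal.ofReal_mul (by positivity), mul_comm]
    simp
  · filter_upwards [ae_restrict_mem measurableSet_Ioi] with r hr
    have hr : 0 < r := hr
    simp only [Pi.zero_apply]
    positivity

lemma gauss_line (q : ℝ) (hq : -1 < q) :
    ∫⁻ r : ℝ, ENNReal.ofReal (rexp (-r ^ 2)) * ENNReal.ofReal |r| ^ q =
      ENNReal.ofReal (Real.Gamma ((q + 1) / 2)) := by
  have h := (Measure.measurePreserving_neg (volume : Measure ℝ)).setLIntegral_comp_preimage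
    (measurableSet_Ioi (a := (0 : ℝ)))
    (f := fun r => ENNReal.ofReal (rexp (-r ^ 2)) * ENNReal.ofReal |r| ^ q) (by fun_prop)
  simp only [Set.neg_preimage, Set.neg_Ioi, neg_zero, even_two, Even.neg_pow, abs_neg] at h
  rw [← lintegral_add_compl _ (measurableSet_Ioi (a := (0 : ℝ))), Set.compl_Ioi,
    ← restrict_Iio_eq_restrict_Iic, h, gauss_Ioi q hq, ← ENNReal.ofReal_add]
  · congr 1; ring
  all_goals
    have := Real.Gamma_pos_of_pos (show 0 < (q + 1) / 2 by linarith)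
    positivity

/-- The two evaluations of the Gaussian moment in direction `u`. -/
lemma gauss_moment {n : ℕ} (hn : n ≠ 0) (u : EuclideanSpace ℝ (Fin n)) (hu : ‖u‖ = 1) (q : ℝ)
    (hq : -1 < q) :
    (∫⁻ θ : sphere (0 : EuclideanSpace ℝ (Fin n)) 1,
        ENNReal.ofReal |inner ℝ (θ : EuclideanSpace ℝ (Fin n)) u| ^ q
        ∂(volume : Measure (EuclideanSpace ℝ (Fin n))).toSphere) *
      ENNReal.ofReal (1 / 2 * Real.Gamma ((q + n) / 2)) =
    ENNReal.ofReal (Real.Gamma ((q + 1) / 2)) *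
      ∫⁻ y : ((ℝ ∙ u)ᗮ), ENNReal.ofReal (rexp (-‖y‖ ^ 2)) := by
  have hn1 : (1 : ℝ) ≤ n := by exact_mod_cast Nat.one_le_iff_ne_zero.2 hn
  have hg : Measurable (fun x : EuclideanSpace ℝ (Fin n) =>
    ENNReal.ofReal (rexp (-‖x‖ ^ 2)) * ENNReal.ofReal |inner ℝ x u| ^ q) := by fun_prop
  have h1 := slice_lemma u hu _ hg
  have h2 := polar_lemma hn _ hg
  rw [h2] at h1
  convert h1 using 1
  · rw [← lintegral_mul_const _ (by fun_prop)]
    refine lintegral_congr fun θ => ?_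
    have e : (q + n) / 2 = ((q + n - 1) + 1) / 2 := by ring
    rw [e, ← gauss_Ioi (q + n - 1) (by linarith), ← lintegral_const_mul _ (by fun_prop)]
    refine setLIntegral_congr_fun measurableSet_Ioi fun r hr => ?_
    have hr : 0 < r := hr
    have hr' : ENNReal.ofReal r ≠ 0 := by simpa using hr
    have hθ : ‖(θ : EuclideanSpace ℝ (Fin n))‖ = 1 := by simp
    simp only [norm_smul, hθ, mul_one, inner_smul_left, abs_mul, Real.norm_eq_abs, abs_of_pos hr,
      RCLike.conj_to_real]
    rw [ENNReal.ofReal_mul hr.le, ENNReal.mul_rpow_of_ne_top (by simp) (by simp)]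
    rw [show q + n - 1 = ((n - 1 : ℕ) : ℝ) + q by
      rw [Nat.cast_sub (by omega)]; push_cast; ring, ENNReal.rpow_add _ _ hr' (by simp),
      ENNReal.rpow_natCast, ENNReal.ofReal_pow hr.le]
    ring
  · rw [← gauss_line q hq, ← lintegral_mul_const _ (by fun_prop)]
    refine lintegral_congr fun t => ?_
    rw [← lintegral_const_mul _ (by fun_prop)]
    refine lintegral_congr fun y => ?_
    have ho : inner ℝ u (y : EuclideanSpace ℝ (Fin n)) = 0 :=
      Submodule.mem_orthogonal_singleton_iff_inner_right.1 y.2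
    have ho' : inner ℝ (y : EuclideanSpace ℝ (Fin n)) u = 0 := by
      rw [real_inner_comm]; exact ho
    have hi : inner ℝ (t • u + (y : EuclideanSpace ℝ (Fin n))) u = t := by
      rw [inner_add_left, ho', inner_smul_left]; simp [hu]
    have hnm : ‖t • u + (y : EuclideanSpace ℝ (Fin n))‖ ^ 2 = t ^ 2 + ‖y‖ ^ 2 := by
      rw [norm_add_sq_real, inner_smul_left, ho, norm_smul, hu]; simp
    rw [hi, hnm, neg_add, Real.exp_add, ENNReal.ofReal_mul (by positivity)]
    ring

lemma sphere_moment {n : ℕ} (hn : n ≠ 0) (u : EuclideanSpace ℝ (Fin n)) (hu : ‖u‖ = 1) (q : ℝ)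
    (hq : -1 < q) :
    (∫⁻ θ : sphere (0 : EuclideanSpace ℝ (Fin n)) 1,
        ENNReal.ofReal |inner ℝ (θ : EuclideanSpace ℝ (Fin n)) u| ^ q ∂(sphMeasure n)) =
      ENNReal.ofReal (Real.Gamma ((n : ℝ) / 2) / Real.Gamma (1 / 2) *
          (Real.Gamma ((q + 1) / 2) / Real.Gamma ((q + n) / 2))) := by
  have hn1 : (1 : ℝ) ≤ n := by exact_mod_cast Nat.one_le_iff_ne_zero.2 hn
  have : Nonempty (Fin n) := ⟨⟨0, Nat.pos_of_ne_zero hn⟩⟩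
  have h1 := gauss_moment hn u hu q hq
  have h0 := gauss_moment hn u hu 0 (by norm_num)
  simp only [ENNReal.rpow_zero, lintegral_const, one_mul, zero_add] at h0
  rw [sphMeasure, lintegral_smul_measure, smul_eq_mul]
  set S := (volume : Measure (EuclideanSpace ℝ (Fin n))).toSphere Set.univ with hS
  set A := ∫⁻ θ : sphere (0 : EuclideanSpace ℝ (Fin n)) 1,
        ENNReal.ofReal |inner ℝ (θ : EuclideanSpace ℝ (Fin n)) u| ^ q
        ∂(volume : Measure (EuclideanSpace ℝ (Fin n))).toSphere
  set G := ∫⁻ y : ((ℝ ∙ u)ᗮ), ENNReal.ofReal (rexp (-‖y‖ ^ 2))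
  have g1 := Real.Gamma_pos_of_pos (show 0 < (q + 1) / 2 by linarith)
  have g2 := Real.Gamma_pos_of_pos (show 0 < (q + n) / 2 by linarith)
  have g3 := Real.Gamma_pos_of_pos (show 0 < (n : ℝ) / 2 by linarith)
  have g4 := Real.Gamma_pos_of_pos (show 0 < (1 : ℝ) / 2 by norm_num)
  have hS0 : S ≠ 0 := by
    rw [hS, Ne, Measure.measure_univ_eq_zero]
    exact Measure.toSphere_ne_zero _
  have hSt : S ≠ ⊤ := measure_ne_top _ _
  have hGt : G ≠ ⊤ := by
    intro h
    rw [h, ENNReal.mul_top (by simpa using g4)] at h0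
    exact ENNReal.mul_ne_top hSt ENNReal.ofReal_ne_top h0
  have hAt : A ≠ ⊤ := by
    intro h
    rw [h, ENNReal.top_mul (by simpa using g2)] at h1
    exact ENNReal.mul_ne_top ENNReal.ofReal_ne_top hGt h1.symm
  have r1 := congrArg ENNReal.toReal h1
  have r0 := congrArg ENNReal.toReal h0
  rw [ENNReal.toReal_mul, ENNReal.toReal_mul, ENNReal.toReal_ofReal (by positivity),
    ENNReal.toReal_ofReal (by positivity)] at r1 r0
  have hSr : 0 < S.toReal := ENNReal.toReal_pos hS0 hSt
  rw [← ENNReal.toReal_eq_toReal_iff' (ENNReal.mul_ne_top (ENNReal.inv_ne_top.2 hS0) hAt)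
    ENNReal.ofReal_ne_top, ENNReal.toReal_mul, ENNReal.toReal_inv,
    ENNReal.toReal_ofReal (by positivity)]
  have hAr : A.toReal = Real.Gamma ((q + 1) / 2) * G.toReal * 2 / Real.Gamma ((q + n) / 2) := by
    field_simp; linarith
  have hSr' : S.toReal = Real.Gamma (1 / 2) * G.toReal * 2 / Real.Gamma (n / 2) := by
    field_simp; field_simp at r0; linarith
  have hGr : G.toReal ≠ 0 := by
    intro h; rw [h] at hSr'; simp at hSr'; exact hSr.ne' hSr'
  rw [hAr, hSr']
  field_simp

/-- The exact `L^1` weighted identity for the hyperplane Radon transform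
(case `k = n-1`, `p = 1`). -/
theorem stmt2 (n : ℕ) (hn : 2 ≤ n) (μ : ℝ) (hμ : -1 < μ)
    (f : EuclideanSpace ℝ (Fin n) → ℝ≥0∞) (hf : Measurable f) :
    (∫⁻ θ, ∫⁻ t : ℝ, Radon n f θ t * ENNReal.ofReal |t| ^ μ ∂volume ∂(sphMeasure n)) =
      ENNReal.ofReal (Real.Gamma ((n : ℝ) / 2) / Real.Gamma (1 / 2) *
          (Real.Gamma ((μ + 1) / 2) / Real.Gamma ((μ + n) / 2))) *
        ∫⁻ x, f x * ENNReal.ofReal ‖x‖ ^ μ := by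
  have hn0 : n ≠ 0 := by omega
  have : Nonempty (Fin n) := ⟨⟨0, Nat.pos_of_ne_zero hn0⟩⟩
  have hS0 : (volume : Measure (EuclideanSpace ℝ (Fin n))).toSphere Set.univ ≠ 0 := by
    rw [Ne, Measure.measure_univ_eq_zero]
    exact Measure.toSphere_ne_zero _
  have hfin : IsFiniteMeasure (sphMeasure n) := by
    constructor
    rw [sphMeasure, Measure.smul_apply, smul_eq_mul]
    exact ENNReal.mul_lt_top (ENNReal.inv_lt_top.2 (pos_iff_ne_zero.2 hS0)) (measure_lt_top _ _)
  have key : ∀ θ : sphere (0 : EuclideanSpace ℝ (Fin n)) 1,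
      ∫⁻ t : ℝ, Radon n f θ t * ENNReal.ofReal |t| ^ μ =
      ∫⁻ x, f x * ENNReal.ofReal |inner ℝ (θ : EuclideanSpace ℝ (Fin n)) x| ^ μ := by
    intro θ
    have hθ : ‖(θ : EuclideanSpace ℝ (Fin n))‖ = 1 := by simp
    rw [slice_lemma (θ : EuclideanSpace ℝ (Fin n)) hθ _ (by fun_prop)]
    refine lintegral_congr fun t => ?_
    rw [Radon, ← lintegral_mul_const _ (by fun_prop)]
    refine lintegral_congr fun y => ?_
    have ho : inner ℝ (θ : EuclideanSpace ℝ (Fin n)) (y : EuclideanSpace ℝ (Fin n)) = 0 :=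
      Submodule.mem_orthogonal_singleton_iff_inner_right.1 y.2
    rw [inner_add_right, ho, inner_smul_right, real_inner_self_eq_norm_sq, hθ]
    simp
  simp_rw [key]
  rw [lintegral_lintegral_swap (by fun_prop), ← lintegral_const_mul _ (by fun_prop)]
  have hne : ∀ᵐ x : EuclideanSpace ℝ (Fin n), x ≠ 0 := Measure.ae_ne volume 0
  refine lintegral_congr_ae ?_
  filter_upwards [hne] with x hx
  have hx' : 0 < ‖x‖ := norm_pos_iff.2 hx
  rw [lintegral_const_mul _ (by fun_prop),
    ← sphere_moment hn0 (‖x‖⁻¹ • x) (by simp [norm_smul, hx'.ne']) μ hμ,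
    mul_left_comm, ← lintegral_mul_const _ (by fun_prop)]
  congr 1
  refine lintegral_congr fun θ => ?_
  rw [← ENNReal.mul_rpow_of_ne_top (by simp) (by simp), ← ENNReal.ofReal_mul (by positivity),
    inner_smul_right, abs_mul, abs_of_pos (inv_pos.2 hx')]
  congr 2
  field_simp
end
end
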